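/- Let (x, y) ∈ E × E with w₁·δ < dist(x, ∂E) and w₁·δ < dist(y, ∂E). If 8·β·d < 1, then ĥₙ(x, y) → h(x, y) = p(x) q(x, y) almost surely as n → ∞. -/

import Mathlib

open MeasureTheory ProbabilityTheory Filter

noncomputable def iterK {S : Type*} [MeasurableSpace S] (R : S → Measure S) : ℕ → S → Measure S
  | 0, y => Measure.dirac y
  | n+1, y => (iterK R n y).bind R

/-!
The summands are nonnegative, so the partial sums are monotone and it suffices to prove almost sure
convergence of the averages along the geometric subsequences `⌊cᵏ⌋`. A summand of index `j` is at
most of order `j ^ (2βd)`, so the geometric mixing makes the variance of the `n`-th partial sum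
`O(n ^ (1 + 4βd))`; as soon as `4βd < 1` the variances of the averages are summable along such a
subsequence. For the means, the law of `Zⱼ⁻` has on `E` the density obtained by averaging `r(ξ, ·)`
over the law of `Zⱼ₋₁⁻`; a change of variables turns the bandwidth into a shift of size `wⱼδ`, and
dominated convergence together with the convergence of the laws to `π` gives the limit
`p(x) q(x, y)`.
-/

open scoped Topology

lemma tendsto_inv_mul_sum_Icc_succ {u : ℕ → ℝ} {L : ℝ}
    (h : Tendsto (fun n : ℕ => (∑ i ∈ Finset.range n, u (i + 1)) / n) atTop (𝓝 L)) :
    Tendsto (fun n : ℕ => (n : ℝ)⁻¹ * ∑ j ∈ Finset.Icc 1 (n + 1), u j) atTop (𝓝 L) := by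
  have hratio : Tendsto (fun n : ℕ => 1 + (n : ℝ)⁻¹) atTop (𝓝 1) := by
    simpa using tendsto_inv_atTop_nhds_zero_nat (𝕜 := ℝ).const_add 1
  have hprod := ((tendsto_add_atTop_iff_nat 1).2 h).mul hratio
  rw [mul_one] at hprod
  refine hprod.congr' ?_
  filter_upwards [eventually_ge_atTop 1] with n hn
  have hsum : ∑ j ∈ Finset.Icc 1 (n + 1), u j = ∑ i ∈ Finset.range (n + 1), u (i + 1) := by
    rw [Finset.range_eq_Ico, Finset.sum_Ico_add' u 0 (n + 1) 1, zero_add,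
      Finset.Ico_add_one_right_eq_Icc]
  rw [hsum]
  push_cast
  field_simp

lemma summable_natFloor_pow_rpow {c γ : ℝ} (hc : 1 < c) (hγ : γ < 0) :
    Summable fun k : ℕ => (⌊c ^ k⌋₊ : ℝ) ^ γ := by
  have hc0 : 0 < c := zero_lt_one.trans hc
  have hgap : 0 < 1 - c⁻¹ := sub_pos.2 (inv_lt_one_of_one_lt₀ hc)
  have hgeom : Summable fun k : ℕ => (1 - c⁻¹) ^ γ * (c ^ γ) ^ k :=
    (summable_geometric_of_lt_one (by positivity)
      (Real.rpow_lt_one_of_one_lt_of_neg hc hγ)).mul_left _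
  refine hgeom.of_nonneg_of_le (fun k => by positivity) fun k => ?_
  calc (⌊c ^ k⌋₊ : ℝ) ^ γ ≤ ((1 - c⁻¹) * c ^ k) ^ γ :=
        Real.rpow_le_rpow_of_nonpos (by positivity) (mul_pow_le_nat_floor_pow hc k) hγ.le
    _ = (1 - c⁻¹) ^ γ * (c ^ γ) ^ k := by
        rw [Real.mul_rpow hgap.le (by positivity), Real.rpow_pow_comm hc0.le]

section StrongLaw

variable {Ω : Type*} [MeasurableSpace Ω] {P : Measure Ω} [IsFiniteMeasure P]

lemma ae_tendsto_sub_integral_of_summable_variance {X : ℕ → Ω → ℝ} (hX : ∀ k, MemLp (X k) 2 P)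
    (hsum : Summable fun k => Var[X k; P]) :
    ∀ᵐ ω ∂P, Tendsto (fun k => X k ω - ∫ ω', X k ω' ∂P) atTop (𝓝 0) := by
  have hmeas : ∀ k, AEMeasurable
      (fun ω => ENNReal.ofReal ((X k ω - ∫ ω', X k ω' ∂P) ^ 2)) P := fun k =>
    (((hX k).aestronglyMeasurable.aemeasurable.sub_const _).pow_const 2).ennreal_ofReal
  have hfin : ∫⁻ ω, ∑' k, ENNReal.ofReal ((X k ω - ∫ ω', X k ω' ∂P) ^ 2) ∂P ≠ ⊤ := by
    simp_rw [lintegral_tsum hmeas, ← evariance_eq_lintegral_ofReal, ← ofReal_variance (hX _)]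
    exact hsum.tsum_ofReal_ne_top
  filter_upwards [ae_lt_top' (AEMeasurable.tsum hmeas) hfin] with ω hω
  have hsq := (ENNReal.tendsto_toReal ENNReal.zero_ne_top).comp
    (ENNReal.tendsto_atTop_zero_of_tsum_ne_top hω.ne)
  simp only [Function.comp_def, ENNReal.toReal_ofReal (sq_nonneg _), ENNReal.toReal_zero] at hsq
  simpa [Real.sqrt_sq_eq_abs, tendsto_zero_iff_abs_tendsto_zero, Function.comp_def] using hsq.sqrt

variable {Y : ℕ → Ω → ℝ} {γ C L : ℝ}

lemma ae_tendsto_sum_div_natFloor_pow_of_variance_le (hY : ∀ i, MemLp (Y i) 2 P) (hγ : γ < 2)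
    (hvar : ∀ n : ℕ, Var[fun ω => ∑ i ∈ Finset.range n, Y i ω; P] ≤ C * (n : ℝ) ^ γ)
    (hmean : Tendsto (fun n => ∫ ω, Y n ω ∂P) atTop (𝓝 L)) {c : ℝ} (hc : 1 < c) :
    ∀ᵐ ω ∂P, Tendsto (fun k : ℕ => (∑ i ∈ Finset.range ⌊c ^ k⌋₊, Y i ω) / ⌊c ^ k⌋₊) atTop
      (𝓝 L) := by
  set N : ℕ → ℕ := fun k => ⌊c ^ k⌋₊
  have hN : ∀ k, (0 : ℝ) < N k := fun k => by
    exact_mod_cast Nat.floor_pos.2 (one_le_pow₀ hc.le)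
  set X : ℕ → Ω → ℝ := fun k ω => (N k : ℝ)⁻¹ * ∑ i ∈ Finset.range (N k), Y i ω
  have hXvar : ∀ k, Var[X k; P] ≤ C * (N k : ℝ) ^ (γ - 2) := fun k => by
    rw [variance_const_mul, Real.rpow_sub (hN k), Real.rpow_two, inv_pow, inv_mul_eq_div,
      ← mul_div_assoc]
    gcongr
    exact hvar _
  have hfluct := ae_tendsto_sub_integral_of_summable_variance
    (fun k => (memLp_finsetSum _ fun i _ => hY i).const_mul (N k : ℝ)⁻¹)
    (((summable_natFloor_pow_rpow hc (sub_neg.2 hγ)).mul_left C).of_nonneg_of_le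
      (fun k => variance_nonneg _ _) hXvar)
  have hXmean : Tendsto (fun k => ∫ ω, X k ω ∂P) atTop (𝓝 L) := by
    have hNtop : Tendsto N atTop atTop :=
      tendsto_nat_floor_atTop.comp (tendsto_pow_atTop_atTop_of_one_lt hc)
    refine (hmean.cesaro.comp hNtop).congr fun k => ?_
    simp only [X, Function.comp_apply, integral_const_mul]
    rw [integral_finsetSum _ fun i _ => (hY i).integrable one_le_two]
  filter_upwards [hfluct] with ω hω
  simpa [X, N, div_eq_inv_mul] using hω.add hXmean

theorem ae_tendsto_sum_div_of_variance_le (hY : ∀ i, MemLp (Y i) 2 P) (hY0 : ∀ i, 0 ≤ᵐ[P] Y i)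
    (hγ : γ < 2)
    (hvar : ∀ n : ℕ, Var[fun ω => ∑ i ∈ Finset.range n, Y i ω; P] ≤ C * (n : ℝ) ^ γ)
    (hmean : Tendsto (fun n => ∫ ω, Y n ω ∂P) atTop (𝓝 L)) :
    ∀ᵐ ω ∂P, Tendsto (fun n : ℕ => (∑ i ∈ Finset.range n, Y i ω) / n) atTop (𝓝 L) := by
  set c : ℕ → ℝ := fun k => 1 + 1 / ((k : ℝ) + 1)
  have hc : ∀ k, 1 < c k := fun k => lt_add_of_pos_right 1 Nat.one_div_pos_of_nat
  have hc1 : Tendsto c atTop (𝓝 1) := by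
    simpa [c] using (tendsto_one_div_add_atTop_nhds_zero_nat (𝕜 := ℝ)).const_add 1
  have hsubseq := ae_all_iff.2 fun k =>
    ae_tendsto_sum_div_natFloor_pow_of_variance_le hY hγ hvar hmean (hc k)
  filter_upwards [hsubseq, ae_all_iff.2 hY0] with ω hω hω0
  refine tendsto_div_of_monotone_of_tendsto_div_floor_pow _ L (fun m n hmn => ?_) c hc hc1 hω
  exact Finset.sum_le_sum_of_subset_of_nonneg (Finset.range_mono hmn) fun i _ _ => hω0 i

lemma variance_sum_range_le_mul_tsum (hY : ∀ i, MemLp (Y i) 2 P) {ψ : ℤ → ℝ} (hψ0 : ∀ z, 0 ≤ ψ z)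
    (hψ : Summable ψ) {n : ℕ} (hcov : ∀ i < n, ∀ j < n, cov[Y i, Y j; P] ≤ ψ (j - i)) :
    Var[fun ω => ∑ i ∈ Finset.range n, Y i ω; P] ≤ n * ∑' z, ψ z := by
  have hrow : ∀ i : ℕ, ∑ j ∈ Finset.range n, ψ ((j : ℤ) - i) ≤ ∑' z, ψ z := fun i => by
    have hinj : Function.Injective fun j : ℕ => (j : ℤ) - i :=
      sub_left_injective.comp Nat.cast_injective
    exact ((hψ.comp_injective hinj).sum_le_tsum _ fun j _ => hψ0 _).trans
      (tsum_comp_le_tsum_of_inj hψ hψ0 hinj)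
  rw [variance_fun_sum' fun i _ => hY i]
  calc ∑ i ∈ Finset.range n, ∑ j ∈ Finset.range n, cov[Y i, Y j; P]
      ≤ ∑ i ∈ Finset.range n, ∑ j ∈ Finset.range n, ψ ((j : ℤ) - i) := by
        gcongr with i hi j hj
        exact hcov i (Finset.mem_range.1 hi) j (Finset.mem_range.1 hj)
    _ ≤ ∑ _i ∈ Finset.range n, ∑' z, ψ z := Finset.sum_le_sum fun i _ => hrow i
    _ = n * ∑' z, ψ z := by rw [Finset.sum_const, Finset.card_range, nsmul_eq_mul]

lemma exists_variance_sum_range_le_rpow (hY : ∀ i, MemLp (Y i) 2 P) {s : ℝ} (hs : 0 ≤ s)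
    (hC : 0 ≤ C) {φ : ℕ → ℝ} (hφ0 : ∀ l, 0 ≤ φ l) (hφ : Summable φ)
    (hcov : ∀ i j, i ≤ j → |cov[Y i, Y j; P]| ≤ C * ((j : ℝ) + 1) ^ s * φ (j - i)) :
    ∃ D, ∀ n : ℕ, Var[fun ω => ∑ i ∈ Finset.range n, Y i ω; P] ≤ D * (n : ℝ) ^ (1 + s) := by
  refine ⟨C * ∑' z : ℤ, φ z.natAbs, fun n => ?_⟩
  have hφZ : Summable fun z : ℤ => φ z.natAbs := by
    simpa [summable_int_iff_summable_nat_and_neg] using hφ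
  have hle : ∀ i j, i ≤ j → j < n → cov[Y i, Y j; P] ≤ C * (n : ℝ) ^ s * φ (j - i) := by
    intro i j hij hj
    have hjn : (j : ℝ) + 1 ≤ n := by exact_mod_cast hj
    have := hφ0 (j - i)
    exact ((le_abs_self _).trans (hcov i j hij)).trans (by gcongr)
  have hψ : ∀ i < n, ∀ j < n, cov[Y i, Y j; P] ≤ C * (n : ℝ) ^ s * φ ((j : ℤ) - i).natAbs := by
    intro i hi j hj
    rcases le_total i j with hij | hji
    · rw [show ((j : ℤ) - i).natAbs = j - i by omega]
      exact hle i j hij hj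
    · rw [show ((j : ℤ) - i).natAbs = i - j by omega, covariance_comm]
      exact hle j i hji hi
  refine (variance_sum_range_le_mul_tsum hY (fun z => mul_nonneg (by positivity) (hφ0 _))
    (hφZ.mul_left _) hψ).trans_eq ?_
  rw [tsum_mul_left, Real.rpow_add_of_nonneg n.cast_nonneg zero_le_one hs, Real.rpow_one]
  ring

end StrongLaw

lemma abs_covariance_comp_le_of_abs_le {Ω T : Type*} [MeasurableSpace Ω] [MeasurableSpace T]
    {P : Measure Ω} {U V : Ω → T} {b : ℝ}
    (hcov : ∀ g h : T → ℝ, Measurable g → Measurable h → (∀ t, |g t| ≤ 1) → (∀ t, |h t| ≤ 1) →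
      |cov[fun ω => g (U ω), fun ω => h (V ω); P]| ≤ b)
    {g h : T → ℝ} (hg : Measurable g) (hh : Measurable h) {A B : ℝ} (hA : 0 < A) (hB : 0 < B)
    (hgA : ∀ t, |g t| ≤ A) (hhB : ∀ t, |h t| ≤ B) :
    |cov[fun ω => g (U ω), fun ω => h (V ω); P]| ≤ A * B * b := by
  have hnormalize : ∀ {f : T → ℝ} {D : ℝ}, 0 < D → (∀ t, |f t| ≤ D) → ∀ t, |D⁻¹ * f t| ≤ 1 :=
    fun hD hf t => by
      rw [abs_mul, abs_of_pos (inv_pos.2 hD)]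
      exact inv_mul_le_one_of_le₀ (hf t) hD.le
  have hscaled := hcov (fun t => A⁻¹ * g t) (fun t => B⁻¹ * h t) (hg.const_mul _) (hh.const_mul _)
    (hnormalize hA hgA) (hnormalize hB hhB)
  rw [covariance_const_mul_left, covariance_const_mul_right, abs_mul, abs_mul,
    abs_of_pos (inv_pos.2 hA), abs_of_pos (inv_pos.2 hB), inv_mul_le_iff₀ hA,
    inv_mul_le_iff₀ hB] at hscaled
  linarith

lemma equicontinuousAt_of_abs_sub_le {ι α : Type*} [PseudoMetricSpace α] {r : ι → α → ℝ}
    {x : α} {E : Set α} (hE : E ∈ 𝓝 x) {L : ℝ}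
    (h : ∀ a, ∀ b ∈ E, ∀ b' ∈ E, |r a b' - r a b| ≤ L * dist b' b) : EquicontinuousAt r x := by
  refine Metric.equicontinuousAt_of_continuity_modulus (fun b => L * dist x b) ?_ r ?_
  · have hcont : Continuous fun b => L * dist x b := by fun_prop
    simpa using hcont.tendsto x
  · filter_upwards [hE] with b hb a
    exact h a b hb x (mem_of_mem_nhds hE)

lemma continuous_uncurry_of_abs_sub_le {α β : Type*} [PseudoMetricSpace α] [PseudoMetricSpace β]
    {q : α → β → ℝ} {L : ℝ} (h₁ : ∀ a b b', |q a b' - q a b| ≤ L * dist b' b)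
    (h₂ : ∀ a a' b, |q a' b - q a b| ≤ L * dist a' a) : Continuous (Function.uncurry q) :=
  (LipschitzWith.uncurry (fun b => .of_dist_le' fun a a' => h₂ a' a b)
    (fun a => .of_dist_le' fun b b' => h₁ a b' b)).continuous

lemma mul_rpow_neg_sub_mul_one_add_le {B b : ℝ} (hB : 0 ≤ B) (hb : 1 ≤ b) {m n : ℕ}
    (hmn : m ≤ n) :
    B * b ^ (-((n : ℝ) - m)) * (1 + b ^ (-(m : ℝ))) ≤ 2 * B * b⁻¹ ^ (n - m) := by
  have hgap : b ^ (-((n : ℝ) - m)) = b⁻¹ ^ (n - m) := by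
    rw [← Nat.cast_sub hmn, Real.rpow_neg (by positivity), Real.rpow_natCast, inv_pow]
  have hone : b ^ (-(m : ℝ)) ≤ 1 := Real.rpow_le_one_of_one_le_of_nonpos hb (by simp)
  rw [hgap]
  calc B * b⁻¹ ^ (n - m) * (1 + b ^ (-(m : ℝ))) ≤ B * b⁻¹ ^ (n - m) * (1 + 1) := by gcongr
    _ = 2 * B * b⁻¹ ^ (n - m) := by ring

lemma abs_covariance_le_of_mixing {Ω T T' : Type*} [MeasurableSpace Ω] [MeasurableSpace T]
    [MeasurableSpace T'] {P : Measure Ω} [IsProbabilityMeasure P] {X : ℕ → Ω → T} {Y : ℕ → Ω → T'}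
    (hX : ∀ n, Measurable (X n)) (hY : ∀ n, Measurable (Y n)) {B b : ℝ} (hB : 0 ≤ B) (hb : 1 ≤ b)
    {m n : ℕ} (hmn : m ≤ n)
    (hmix : ∀ g h : T → T' → ℝ, Measurable (Function.uncurry g) → Measurable (Function.uncurry h) →
      (∀ s t, |g s t| ≤ 1) → (∀ s t, |h s t| ≤ 1) →
        |∫ ω, g (X m ω) (Y m ω) * h (X n ω) (Y n ω) ∂P
          - (∫ ω, g (X m ω) (Y m ω) ∂P) * ∫ ω, h (X n ω) (Y n ω) ∂P|
            ≤ B * b ^ (-((n : ℝ) - m)) * (1 + b ^ (-(m : ℝ))))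
    {g h : T × T' → ℝ} (hg : Measurable g) (hh : Measurable h) (hg1 : ∀ z, |g z| ≤ 1)
    (hh1 : ∀ z, |h z| ≤ 1) :
    |cov[fun ω => g (X m ω, Y m ω), fun ω => h (X n ω, Y n ω); P]|
      ≤ 2 * B * b⁻¹ ^ (n - m) := by
  have hLp : ∀ {f : T × T' → ℝ}, Measurable f → (∀ z, |f z| ≤ 1) → ∀ l,
      MemLp (fun ω => f (X l ω, Y l ω)) 2 P := fun hf hf1 l =>
    .of_bound (hf.comp ((hX l).prodMk (hY l))).aestronglyMeasurable 1 (ae_of_all _ fun ω => hf1 _)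
  rw [covariance_eq_sub (hLp hg hg1 m) (hLp hh hh1 n)]
  exact (hmix (fun s t => g (s, t)) (fun s t => h (s, t)) hg hh (fun s t => hg1 (s, t))
    fun s t => hh1 (s, t)).trans (mul_rpow_neg_sub_mul_one_add_le hB hb hmn)

section Laws

variable {S T : Type*} [MeasurableSpace S] [MeasurableSpace T]

lemma norm_measureReal_le_one {μ : Measure S} [IsProbabilityMeasure μ] (B : Set S) :
    ‖μ.real B‖ ≤ 1 := by
  rw [Real.norm_of_nonneg measureReal_nonneg]
  exact measureReal_le_one

lemma iterK_eq_pow (R : Kernel S S) (n : ℕ) (ξ : S) : iterK R n ξ = (R ^ n) ξ := by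
  induction n with
  | zero => rfl
  | succ n ih => rw [iterK, ih, pow_succ']; rfl

lemma tendsto_measureReal_pow_of_abs_iterK_sub_le {R : Kernel S S} {ξ : S} {B : Set S}
    {c κ ρ : ℝ} (hρ : 1 < ρ)
    (h : ∀ n : ℕ, 1 ≤ n → |(iterK R n ξ B).toReal - c| ≤ κ * ρ ^ (-(n : ℝ))) :
    Tendsto (fun n => ((R ^ n) ξ).real B) atTop (𝓝 c) := by
  have hrate : Tendsto (fun n : ℕ => κ * ρ ^ (-(n : ℝ))) atTop (𝓝 0) := by
    simpa using ((tendsto_rpow_atBot_of_base_gt_one ρ hρ).comp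
      (tendsto_neg_atTop_atBot.comp tendsto_natCast_atTop_atTop)).const_mul κ
  rw [tendsto_iff_norm_sub_tendsto_zero]
  refine squeeze_zero' (Eventually.of_forall fun n => norm_nonneg _) ?_ hrate
  filter_upwards [eventually_ge_atTop 1] with n hn
  simpa only [iterK_eq_pow, measureReal_def, Real.norm_eq_abs] using h n hn

lemma measurable_of_forall_eq_setLIntegral {μ : Measure T} [SFinite μ] {κ : S → Measure T}
    {f : S → T → ℝ} (hf : Measurable (Function.uncurry f))
    (h : ∀ ξ B, MeasurableSet B → κ ξ B = ∫⁻ z in B, ENNReal.ofReal (f ξ z) ∂μ) : Measurable κ :=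
  Measure.measurable_of_measurable_coe κ fun B hB => by
    simp_rw [h _ B hB]
    exact hf.ennreal_ofReal.lintegral_prod_right'

lemma isMarkovKernel_pow (R : Kernel S S) [IsMarkovKernel R] (n : ℕ) : IsMarkovKernel (R ^ n) := by
  induction n with
  | zero => exact inferInstanceAs (IsMarkovKernel Kernel.id)
  | succ n _ =>
    rw [pow_succ']
    exact Kernel.IsMarkovKernel.comp R (R ^ n)

section CondDistrib

variable {Ω : Type*} {m mΩ : MeasurableSpace Ω} {P : Measure Ω} [IsFiniteMeasure P]

lemma iSup_comap_succ_le {X : ℕ → Ω → S} (hX : ∀ n, Measurable (X n)) (n : ℕ) :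
    ⨆ i : Fin n, MeasurableSpace.comap (X (i + 1)) inferInstance ≤ mΩ :=
  iSup_le fun i => (hX (i + 1)).comap_le

lemma measurable_iSup_comap_succ (X : ℕ → Ω → S) {n : ℕ} (hn : 1 ≤ n) :
    Measurable[⨆ i : Fin n, MeasurableSpace.comap (X (i + 1)) inferInstance] (X n) := by
  obtain ⟨k, rfl⟩ := Nat.exists_eq_add_of_le' hn
  exact measurable_iff_comap_le.2
    (le_iSup (fun i : Fin (k + 1) => MeasurableSpace.comap (X (i + 1)) inferInstance) (Fin.last k))

lemma hasCondDistrib_of_condExp (hm : m ≤ mΩ) {X : Ω → S} (hX : Measurable[m] X) {Y : Ω → T}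
    (hY : Measurable Y) {κ : Kernel S T} [IsMarkovKernel κ]
    (h : ∀ g : T → ℝ, Measurable g → (∃ C, ∀ u, |g u| ≤ C) →
      P[fun ω => g (Y ω) | m] =ᵐ[P] fun ω => ∫ u, g u ∂κ (X ω)) :
    HasCondDistrib Y X κ P := by
  have hX' : Measurable X := hX.mono hm le_rfl
  refine ⟨(hX'.prodMk hY).aemeasurable, Measure.ext_prod fun {A B} hA hB => ?_⟩
  have hcond := h (B.indicator 1) (measurable_one.indicator hB)
    ⟨1, fun u => by by_cases hu : u ∈ B <;> simp [hu]⟩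
  simp_rw [integral_indicator_one hB] at hcond
  have hκB : Measurable fun ω => (κ (X ω)).real B :=
    ((κ.measurable_coe hB).comp hX').ennreal_toReal
  have hrect : P.real (X ⁻¹' A ∩ Y ⁻¹' B) = ∫ ω in X ⁻¹' A, (κ (X ω)).real B ∂P :=
    calc P.real (X ⁻¹' A ∩ Y ⁻¹' B)
        = ∫ ω in X ⁻¹' A, (Y ⁻¹' B).indicator 1 ω ∂P := by
          rw [integral_indicator_one (hY hB), measureReal_restrict_apply (hY hB), Set.inter_comm]
      _ = ∫ ω in X ⁻¹' A, (P[(Y ⁻¹' B).indicator 1 | m]) ω ∂P :=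
          (setIntegral_condExp hm ((integrable_const (1 : ℝ)).indicator (hY hB)) (hX hA)).symm
      _ = ∫ ω in X ⁻¹' A, (κ (X ω)).real B ∂P :=
          setIntegral_congr_ae (hX' hA) (hcond.mono fun ω hω _ => hω)
  rw [Measure.map_apply (hX'.prodMk hY) (hA.prod hB), Measure.compProd_apply_prod hA hB,
    Set.mk_preimage_prod, setLIntegral_map hA (κ.measurable_coe hB) hX', ← ofReal_measureReal,
    hrect, ofReal_integral_eq_lintegral_ofReal _ (ae_of_all _ fun ω => measureReal_nonneg)]
  · exact lintegral_congr fun ω => ofReal_measureReal (measure_ne_top _ _)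
  · exact .of_bound hκB.aestronglyMeasurable 1 (ae_of_all _ fun ω => norm_measureReal_le_one B)

lemma map_eq_comp_of_hasCondDistrib {X : Ω → S} {Y : Ω → T} {κ : Kernel S T} [IsSFiniteKernel κ]
    (h : HasCondDistrib Y X κ P) : P.map Y = κ ∘ₘ P.map X := by
  rw [← Measure.snd_compProd, ← h.map_eq, Measure.snd_map_prodMk₀ h.aemeasurable_fst]

lemma map_eq_pow_comp {X : ℕ → Ω → S} {R : Kernel S S} [IsMarkovKernel R]
    (h : ∀ n, HasCondDistrib (X (n + 1)) (X n) R P) (n : ℕ) :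
    P.map (X n) = (R ^ n) ∘ₘ P.map (X 0) := by
  induction n with
  | zero => exact Measure.id_comp.symm
  | succ n ih =>
    rw [map_eq_comp_of_hasCondDistrib (h n), ih, Measure.comp_assoc, pow_succ']
    rfl

end CondDistrib

lemma tendsto_measureReal_comp {μ : Measure S} [IsProbabilityMeasure μ] {κ : ℕ → Kernel S T}
    [∀ n, IsMarkovKernel (κ n)] {B : Set T} (hB : MeasurableSet B) {c : ℝ}
    (h : ∀ᵐ ξ ∂μ, Tendsto (fun n => (κ n ξ).real B) atTop (𝓝 c)) :
    Tendsto (fun n => (κ n ∘ₘ μ).real B) atTop (𝓝 c) := by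
  have hmeas : ∀ n, Measurable fun ξ => κ n ξ B := fun n => (κ n).measurable_coe hB
  have hreal : ∀ n, (κ n ∘ₘ μ).real B = ∫ ξ, (κ n ξ).real B ∂μ := fun n => by
    rw [measureReal_def, Measure.bind_apply hB (κ n).aemeasurable,
      ← integral_toReal (hmeas n).aemeasurable (ae_of_all _ fun ξ => measure_lt_top _ _)]
    rfl
  have hlim := tendsto_integral_of_dominated_convergence (F := fun n ξ => (κ n ξ).real B)
    (fun _ => (1 : ℝ)) (fun n => (hmeas n).ennreal_toReal.aestronglyMeasurable)
    (integrable_const _) (fun n => ae_of_all _ fun ξ => norm_measureReal_le_one B) h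
  simpa [hreal] using hlim

lemma tendsto_integral_of_tendsto_measureReal {ν : ℕ → Measure S} {π : Measure S}
    [∀ n, IsProbabilityMeasure (ν n)] [IsProbabilityMeasure π]
    (h : ∀ B, MeasurableSet B → Tendsto (fun n => (ν n).real B) atTop (𝓝 (π.real B)))
    {g : S → ℝ} (hg : Measurable g) (hg0 : ∀ u, 0 ≤ g u) {M : ℝ} (hM : ∀ u, g u ≤ M) :
    Tendsto (fun n => ∫ u, g u ∂ν n) atTop (𝓝 (∫ u, g u ∂π)) := by
  have hlayer : ∀ (m : Measure S) [IsProbabilityMeasure m],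
      ∫ u, g u ∂m = ∫ t in Set.Ioc 0 M, m.real {a | t ≤ g a} := fun m _ =>
    (Integrable.of_bound hg.aestronglyMeasurable M (ae_of_all _ fun u => by
      rw [Real.norm_of_nonneg (hg0 u)]; exact hM u)).integral_eq_integral_Ioc_meas_le
      (ae_of_all _ hg0) (ae_of_all _ hM)
  simp_rw [hlayer]
  refine tendsto_integral_of_dominated_convergence (fun _ => 1) (fun n => ?_) (integrable_const _)
    (fun n => ae_of_all _ fun t => norm_measureReal_le_one _)
    (ae_of_all _ fun t => h _ (measurableSet_le measurable_const hg))
  have hanti : Antitone fun t : ℝ => (ν n).real {a | t ≤ g a} := fun s t hst =>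
    measureReal_mono fun a ha => le_trans hst ha
  exact hanti.measurable.aestronglyMeasurable

lemma tendsto_integral_map_of_tendsto_pow {Ω : Type*} [MeasurableSpace Ω] {P : Measure Ω}
    [IsProbabilityMeasure P] {X : ℕ → Ω → S} {R : Kernel S S} [IsMarkovKernel R]
    {π : Measure S} [IsProbabilityMeasure π] (hX : ∀ n, HasCondDistrib (X (n + 1)) (X n) R P)
    (hπ : ∀ B, MeasurableSet B →
      ∀ᵐ ξ ∂P.map (X 0), Tendsto (fun n => ((R ^ n) ξ).real B) atTop (𝓝 (π.real B)))
    {g : S → ℝ} (hg : Measurable g) (hg0 : ∀ u, 0 ≤ g u) {M : ℝ} (hM : ∀ u, g u ≤ M) :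
    Tendsto (fun n => ∫ u, g u ∂P.map (X n)) atTop (𝓝 (∫ u, g u ∂π)) := by
  have hprob := fun n => Measure.isProbabilityMeasure_map (hX n).aemeasurable_fst
  have hpow := isMarkovKernel_pow R
  refine tendsto_integral_of_tendsto_measureReal (fun B hB => ?_) hg hg0 hM
  exact (tendsto_measureReal_comp hB (hπ B hB)).congr fun n => by rw [← map_eq_pow_comp hX n]

lemma tendsto_integral_of_equicontinuousAt {α : Type*} [TopologicalSpace α] {ν : ℕ → Measure S}
    [∀ n, IsProbabilityMeasure (ν n)] {r : S → α → ℝ} {x : α} (hr : EquicontinuousAt r x)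
    (hint : ∀ n z, Integrable (fun ξ => r ξ z) (ν n)) {u : ℕ → α} (hu : Tendsto u atTop (𝓝 x))
    {c : ℝ} (hc : Tendsto (fun n => ∫ ξ, r ξ x ∂ν n) atTop (𝓝 c)) :
    Tendsto (fun n => ∫ ξ, r ξ (u n) ∂ν n) atTop (𝓝 c) := by
  have hdiff : Tendsto (fun n => ∫ ξ, r ξ (u n) ∂ν n - ∫ ξ, r ξ x ∂ν n) atTop (𝓝 0) := by
    rw [(Metric.nhds_basis_closedBall (x := (0 : ℝ))).tendsto_right_iff]
    intro ε hε
    filter_upwards [hu.eventually (Metric.equicontinuousAt_iff_right.1 hr ε hε)] with n hn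
    have hclose : ∀ ξ, ‖r ξ (u n) - r ξ x‖ ≤ ε := fun ξ => by
      rw [← dist_eq_norm, dist_comm]
      exact (hn ξ).le
    rw [mem_closedBall_zero_iff, ← integral_sub (hint n _) (hint n _)]
    simpa using norm_integral_le_of_norm_le_const (μ := ν n) (ae_of_all _ hclose)
  simpa using hdiff.add hc

end Laws

section Density

variable {S V : Type*} [MeasurableSpace S] [MeasurableSpace V] {ν : Measure V} {E : Set V}

lemma restrict_eq_withDensity_of_forall_subset {m : Measure V} {f : V → ENNReal}
    (hE : MeasurableSet E) (h : ∀ B ⊆ E, MeasurableSet B → m B = ∫⁻ z in B, f z ∂ν) :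
    m.restrict E = (ν.restrict E).withDensity f := by
  ext B hB
  rw [Measure.restrict_apply hB, withDensity_apply _ hB, Measure.restrict_restrict hB]
  exact h _ Set.inter_subset_right (hB.inter hE)

lemma restrict_comp_eq_withDensity [SFinite ν] {μ : Measure S} [SFinite μ] {κ : Kernel S V}
    {r : S → V → ℝ} (hr : Measurable (Function.uncurry r)) (hr0 : ∀ ξ z, 0 ≤ r ξ z)
    (hint : ∀ z, Integrable (fun ξ => r ξ z) μ) (hE : MeasurableSet E)
    (h : ∀ᵐ ξ ∂μ, (κ ξ).restrict E = (ν.restrict E).withDensity fun z => ENNReal.ofReal (r ξ z)) :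
    (κ ∘ₘ μ).restrict E
      = (ν.restrict E).withDensity fun z => ENNReal.ofReal (∫ ξ, r ξ z ∂μ) := by
  refine restrict_eq_withDensity_of_forall_subset hE fun B hBE hB => ?_
  have hκB : ∀ᵐ ξ ∂μ, κ ξ B = ∫⁻ z in B, ENNReal.ofReal (r ξ z) ∂ν := by
    filter_upwards [h] with ξ hξ
    have hBξ := congrArg (fun m : Measure V => m B) hξ
    simpa only [Measure.restrict_apply hB, withDensity_apply _ hB, Measure.restrict_restrict hB,
      Set.inter_eq_self_of_subset_left hBE] using hBξ
  rw [Measure.bind_apply hB κ.aemeasurable, lintegral_congr_ae hκB,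
    lintegral_lintegral_swap hr.ennreal_ofReal.aemeasurable]
  exact lintegral_congr fun z =>
    (ofReal_integral_eq_lintegral_ofReal (hint z) (ae_of_all _ fun ξ => hr0 ξ z)).symm

lemma integral_eq_integral_mul_of_restrict_eq_withDensity {m : Measure V} {f : V → ℝ}
    (hf : Measurable f) (hf0 : ∀ z, 0 ≤ f z)
    (h : m.restrict E = (ν.restrict E).withDensity fun z => ENNReal.ofReal (f z))
    {ψ : V → ℝ} (hψ : ∀ z ∉ E, ψ z = 0) :
    ∫ z, ψ z ∂m = ∫ z, ψ z * f z ∂ν := by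
  rw [← setIntegral_eq_integral_of_forall_compl_eq_zero hψ, h,
    integral_withDensity_eq_integral_toReal_smul hf.ennreal_ofReal
      (ae_of_all _ fun z => ENNReal.ofReal_lt_top),
    ← setIntegral_eq_integral_of_forall_compl_eq_zero (s := E) (f := fun z => ψ z * f z)
      fun z hz => by rw [hψ z hz, zero_mul]]
  simp only [ENNReal.toReal_ofReal (hf0 _), smul_eq_mul, mul_comm]

end Density

lemma tendsto_integral_mul_of_tendsto_on_support {V : Type*} [MeasurableSpace V] {ν : Measure V}
    {K : V → ℝ} (hK : Integrable K ν) (hK1 : ∫ s, K s ∂ν = 1) {F : ℕ → V → ℝ}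
    (hF : ∀ n, Measurable (F n)) {M : ℝ} (hFM : ∀ n s, |F n s| ≤ M) {c : ℝ}
    (h : ∀ s ∈ Function.support K, Tendsto (fun n => F n s) atTop (𝓝 c)) :
    Tendsto (fun n => ∫ s, K s * F n s ∂ν) atTop (𝓝 c) := by
  have hlim : Tendsto (fun n => ∫ s, K s * F n s ∂ν) atTop (𝓝 (∫ s, K s * c ∂ν)) := by
    refine tendsto_integral_of_dominated_convergence (fun s => |K s| * M)
      (fun n => hK.aestronglyMeasurable.mul (hF n).aestronglyMeasurable) (hK.abs.mul_const M)
      (fun n => ae_of_all _ fun s => ?_) (ae_of_all _ fun s => ?_)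
    · rw [norm_mul, Real.norm_eq_abs, Real.norm_eq_abs]
      gcongr
      exact hFM n s
    · by_cases hs : K s = 0
      · simp only [hs, zero_mul, tendsto_const_nhds]
      · exact (h s hs).const_mul _
  rwa [integral_mul_const, hK1, one_mul] at hlim

lemma abs_integral_mul_le_of_abs_le {V : Type*} [MeasurableSpace V] {ν : Measure V} {K : V → ℝ}
    (hK0 : ∀ s, 0 ≤ K s) (hK : Integrable K ν) (hK1 : ∫ s, K s ∂ν = 1) {F : V → ℝ} {M : ℝ}
    (hFM : ∀ s, |F s| ≤ M) : |∫ s, K s * F s ∂ν| ≤ M := by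
  have hbound : ∀ s, ‖K s * F s‖ ≤ K s * M := fun s => by
    rw [norm_mul, Real.norm_of_nonneg (hK0 s)]
    exact mul_le_mul_of_nonneg_left (hFM s) (hK0 s)
  calc |∫ s, K s * F s ∂ν| ≤ ∫ s, K s * M ∂ν :=
        norm_integral_le_of_norm_le (hK.mul_const M) (ae_of_all _ hbound)
    _ = M := by rw [integral_mul_const, hK1, one_mul]

section RescaledKernel

variable {V : Type*} [NormedAddCommGroup V] [NormedSpace ℝ V]

/-- The kernel `K` at bandwidth `w` centred at `x`, as a function of the observation `a`: the
summand `w⁻ᵈ K((a - x) / w)` of a kernel density estimator, `d` being the dimension of `V`. -/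
noncomputable def rescaledKernel (K : V → ℝ) (w : ℝ) (x a : V) : ℝ :=
  (w ^ Module.finrank ℝ V)⁻¹ * K (w⁻¹ • (a - x))

variable {K : V → ℝ} {w δ C : ℝ} {x y a b : V}

lemma rescaledKernel_mul_rescaledKernel (K : V → ℝ) (w : ℝ) (x y a b : V) :
    rescaledKernel K w x a * rescaledKernel K w y b
      = (w ^ (2 * Module.finrank ℝ V))⁻¹ * (K (w⁻¹ • (a - x)) * K (w⁻¹ • (b - y))) := by
  rw [rescaledKernel, rescaledKernel, mul_mul_mul_comm, ← mul_inv, ← pow_add, two_mul]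

lemma rescaledKernel_nonneg (hK0 : ∀ s, 0 ≤ K s) (hw : 0 ≤ w) : 0 ≤ rescaledKernel K w x a :=
  mul_nonneg (by positivity) (hK0 _)

lemma abs_rescaledKernel_le (hK : ∀ s, |K s| ≤ C) (hw : 0 ≤ w) :
    |rescaledKernel K w x a| ≤ (w ^ Module.finrank ℝ V)⁻¹ * C := by
  rw [rescaledKernel, abs_mul, abs_of_nonneg (by positivity)]
  gcongr
  exact hK _

lemma abs_rescaledKernel_mul_rescaledKernel_le (hK : ∀ s, |K s| ≤ C) (hw : 0 ≤ w) :
    |rescaledKernel K w x a * rescaledKernel K w y b| ≤ ((w ^ Module.finrank ℝ V)⁻¹ * C) ^ 2 := by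
  rw [abs_mul, sq]
  exact mul_le_mul (abs_rescaledKernel_le hK hw) (abs_rescaledKernel_le hK hw) (abs_nonneg _)
    ((abs_nonneg _).trans (abs_rescaledKernel_le (x := x) (a := a) hK hw))

lemma rescaledKernel_eq_zero_of_notMem_ball (hK : Function.support K ⊆ Metric.ball 0 δ)
    (hw : 0 < w) (ha : a ∉ Metric.ball x (w * δ)) : rescaledKernel K w x a = 0 := by
  rw [rescaledKernel, Function.notMem_support.1 (mt (@hK _) ?_), mul_zero]
  rwa [mem_ball_zero_iff, norm_smul, norm_inv, Real.norm_of_nonneg hw.le, inv_mul_lt_iff₀ hw,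
    ← mem_ball_iff_norm]

variable [MeasurableSpace V] [BorelSpace V]

lemma measurable_rescaledKernel (hK : Measurable K) : Measurable (rescaledKernel K w x) :=
  (hK.comp ((measurable_id.sub_const x).const_smul w⁻¹)).const_mul _

lemma measurable_rescaledKernel_mul_rescaledKernel (hK : Measurable K) :
    Measurable fun z : V × V => rescaledKernel K w x z.1 * rescaledKernel K w y z.2 :=
  ((measurable_rescaledKernel hK).comp measurable_fst).mul
    ((measurable_rescaledKernel hK).comp measurable_snd)

variable [FiniteDimensional ℝ V] {ν : Measure V} [ν.IsAddHaarMeasure]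

lemma integral_rescaledKernel_mul (K f : V → ℝ) (hw : 0 < w) (x : V) :
    ∫ a, rescaledKernel K w x a * f a ∂ν = ∫ s, K s * f (x + w • s) ∂ν := by
  calc ∫ a, rescaledKernel K w x a * f a ∂ν
      = (w ^ Module.finrank ℝ V)⁻¹ * ∫ a, K (w⁻¹ • (a - x)) * f (x + (a - x)) ∂ν := by
        simp only [rescaledKernel, mul_assoc, integral_const_mul, add_sub_cancel]
    _ = (w ^ Module.finrank ℝ V)⁻¹ * ∫ a, K (w⁻¹ • a) * f (x + w • w⁻¹ • a) ∂ν := by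
        rw [integral_sub_right_eq_self (fun a => K (w⁻¹ • a) * f (x + a)) x]
        simp only [smul_inv_smul₀ hw.ne']
    _ = ∫ s, K s * f (x + w • s) ∂ν := by
        rw [Measure.integral_comp_inv_smul ν fun s => K s * f (x + w • s),
          abs_of_pos (by positivity), smul_eq_mul, inv_mul_cancel_left₀ (by positivity)]

end RescaledKernel

section SmoothedMean

variable {V : Type*} [NormedAddCommGroup V] [NormedSpace ℝ V] [MeasurableSpace V] [BorelSpace V]
  {ν : Measure V} {K : V → ℝ} {δ C : ℝ} {x y : V} {q : V → V → ℝ} {Cq : ℝ} {E : Set V} {w : ℕ → ℝ}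

lemma tendsto_integral_mul_comp_add_smul (hK : Integrable K ν) (hK1 : ∫ s, K s ∂ν = 1)
    (hq : Measurable (Function.uncurry q)) (hqC : ∀ a b, |q a b| ≤ Cq)
    (hqc : ContinuousAt (Function.uncurry q) (x, y)) (hw : Tendsto w atTop (𝓝 0))
    {u : ℕ → V} (hu : Tendsto u atTop (𝓝 x)) :
    Tendsto (fun n => ∫ t, K t * q (u n) (y + w n • t) ∂ν) atTop (𝓝 (q x y)) := by
  refine tendsto_integral_mul_of_tendsto_on_support hK hK1
    (fun n => hq.of_uncurry_left.comp ((measurable_id.const_smul (w n)).const_add y))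
    (fun n t => hqC _ _) fun t _ => ?_
  have hy : Tendsto (fun n => y + w n • t) atTop (𝓝 y) := by
    simpa using (hw.smul_const t).const_add y
  exact hqc.tendsto.comp (hu.prodMk_nhds hy)

variable [FiniteDimensional ℝ V] [ν.IsAddHaarMeasure]

lemma measurable_integral_mul_comp_add_smul (hK : Measurable K)
    (hq : Measurable (Function.uncurry q)) (w : ℝ) :
    Measurable fun a => ∫ t, K t * q a (y + w • t) ∂ν := by
  have hjoint : Measurable (Function.uncurry fun a t => K t * q a (y + w • t)) :=
    (hK.comp measurable_snd).mul
      (hq.comp (measurable_fst.prodMk ((measurable_snd.const_smul w).const_add y)))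
  exact hjoint.stronglyMeasurable.integral_prod_right.measurable

lemma integral_rescaledKernel_mul_rescaledKernel_compProd {Q : Kernel V V} [IsMarkovKernel Q]
    (hQ : ∀ a, Q a = ν.withDensity fun b => ENNReal.ofReal (q a b))
    (hq : Measurable (Function.uncurry q)) (hq0 : ∀ a b, 0 ≤ q a b)
    (hK : Measurable K) (hKC : ∀ s, |K s| ≤ C) (hKδ : Function.support K ⊆ Metric.ball 0 δ)
    {μ : Measure V} [IsProbabilityMeasure μ] {f : V → ℝ} (hf : Measurable f) (hf0 : ∀ a, 0 ≤ f a)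
    (hμ : μ.restrict E = (ν.restrict E).withDensity fun a => ENNReal.ofReal (f a))
    {w : ℝ} (hw : 0 < w) (hball : Metric.ball x (w * δ) ⊆ E) :
    ∫ z, rescaledKernel K w x z.1 * rescaledKernel K w y z.2 ∂(μ ⊗ₘ Q)
      = ∫ s, K s * ((∫ t, K t * q (x + w • s) (y + w • t) ∂ν) * f (x + w • s)) ∂ν := by
  have hint : Integrable (fun z : V × V => rescaledKernel K w x z.1 * rescaledKernel K w y z.2)
      (μ ⊗ₘ Q) :=
    .of_bound (measurable_rescaledKernel_mul_rescaledKernel hK).aestronglyMeasurable _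
      (ae_of_all _ fun z => abs_rescaledKernel_mul_rescaledKernel_le hKC hw.le)
  have hinner : ∀ a, ∫ b, rescaledKernel K w y b ∂Q a = ∫ t, K t * q a (y + w • t) ∂ν := by
    intro a
    rw [integral_eq_integral_mul_of_restrict_eq_withDensity (ν := ν) (E := Set.univ)
      hq.of_uncurry_left (hq0 a) (by simpa using hQ a) fun z hz => absurd trivial hz,
      integral_rescaledKernel_mul K _ hw]
  rw [Measure.integral_compProd hint]
  simp only [integral_const_mul, hinner]
  rw [integral_eq_integral_mul_of_restrict_eq_withDensity hf hf0 hμ fun z hz => ?_]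
  · simp only [mul_assoc]
    exact integral_rescaledKernel_mul K _ hw x
  · rw [rescaledKernel_eq_zero_of_notMem_ball hKδ hw fun h => hz (hball h), zero_mul]

theorem tendsto_integral_rescaledKernel_mul_rescaledKernel_compProd
    {Q : Kernel V V} [IsMarkovKernel Q]
    (hQ : ∀ a, Q a = ν.withDensity fun b => ENNReal.ofReal (q a b))
    (hq : Measurable (Function.uncurry q)) (hq0 : ∀ a b, 0 ≤ q a b) (hqC : ∀ a b, q a b ≤ Cq)
    (hqc : ContinuousAt (Function.uncurry q) (x, y))
    (hK : Measurable K) (hK0 : ∀ s, 0 ≤ K s) (hKC : ∀ s, K s ≤ C) (hK1 : ∫ s, K s ∂ν = 1)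
    (hKδ : Function.support K ⊆ Metric.ball 0 δ) (hE : E ∈ 𝓝 x)
    {μ : ℕ → Measure V} [∀ n, IsProbabilityMeasure (μ n)] {f : ℕ → V → ℝ}
    (hf : ∀ n, Measurable (f n)) (hf0 : ∀ n a, 0 ≤ f n a) {M : ℝ} (hfM : ∀ n a, f n a ≤ M)
    (hμ : ∀ n, (μ n).restrict E = (ν.restrict E).withDensity fun a => ENNReal.ofReal (f n a))
    (hw0 : ∀ n, 0 < w n) (hw : Tendsto w atTop (𝓝 0)) {c : ℝ}
    (hfc : ∀ u : ℕ → V, Tendsto u atTop (𝓝 x) → Tendsto (fun n => f n (u n)) atTop (𝓝 c)) :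
    Tendsto (fun n => ∫ z, rescaledKernel K (w n) x z.1 * rescaledKernel K (w n) y z.2
      ∂(μ n ⊗ₘ Q)) atTop (𝓝 (q x y * c)) := by
  have hKint : Integrable K ν := .of_integral_ne_zero (hK1.trans_ne one_ne_zero)
  have habs : ∀ a b, |q a b| ≤ Cq := fun a b => (abs_of_nonneg (hq0 a b)).trans_le (hqC a b)
  set G : ℕ → V → ℝ := fun n a => ∫ t, K t * q a (y + w n • t) ∂ν
  have hGC : ∀ n a, |G n a| ≤ Cq := fun n a =>
    abs_integral_mul_le_of_abs_le hK0 hKint hK1 fun t => habs _ _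
  have hF : ∀ n, Measurable fun s => G n (x + w n • s) * f n (x + w n • s) := fun n =>
    ((measurable_integral_mul_comp_add_smul hK hq (w n)).mul (hf n)).comp
      ((measurable_id.const_smul (w n)).const_add x)
  have hFM : ∀ n s, |G n (x + w n • s) * f n (x + w n • s)| ≤ Cq * M := fun n s => by
    rw [abs_mul, abs_of_nonneg (hf0 _ _)]
    exact mul_le_mul (hGC _ _) (hfM _ _) (hf0 _ _) ((abs_nonneg _).trans (habs x y))
  have hsmooth : Tendsto (fun n => ∫ s, K s * (G n (x + w n • s) * f n (x + w n • s)) ∂ν) atTop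
      (𝓝 (q x y * c)) := by
    refine tendsto_integral_mul_of_tendsto_on_support hKint hK1 hF hFM fun s _ => ?_
    have hu : Tendsto (fun n => x + w n • s) atTop (𝓝 x) := by
      simpa using (hw.smul_const s).const_add x
    exact (tendsto_integral_mul_comp_add_smul hKint hK1 hq habs hqc hw hu).mul (hfc _ hu)
  refine hsmooth.congr' ?_
  obtain ⟨ε, hε, hball⟩ := Metric.mem_nhds_iff.1 hE
  have hwδ : ∀ᶠ n in atTop, w n * δ < ε :=
    (by simpa using hw.mul_const δ : Tendsto (fun n => w n * δ) atTop (𝓝 0)).eventually_lt_const hε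
  filter_upwards [hwδ] with n hn
  exact (integral_rescaledKernel_mul_rescaledKernel_compProd hQ hq hq0 hK
    (fun s => (abs_of_nonneg (hK0 s)).trans_le (hKC s)) hKδ (hf n) (hf0 n) (hμ n) (hw0 n)
    ((Metric.ball_subset_ball hn.le).trans hball)).symm

end SmoothedMean

section KernelEstimator

variable {V : Type*} [NormedAddCommGroup V] [NormedSpace ℝ V] [MeasurableSpace V] [BorelSpace V]
  {Ω : Type*} [MeasurableSpace Ω] {P : Measure Ω} {K : V → ℝ} {C : ℝ} {x y : V}

lemma memLp_rescaledKernel_mul_rescaledKernel [IsFiniteMeasure P]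
    (hK : Measurable K) (hKC : ∀ s, |K s| ≤ C) {w : ℝ} (hw : 0 ≤ w) {U W : Ω → V}
    (hU : AEMeasurable U P) (hW : AEMeasurable W P) (p : ENNReal) :
    MemLp (fun ω => rescaledKernel K w x (U ω) * rescaledKernel K w y (W ω)) p P :=
  .of_bound ((measurable_rescaledKernel_mul_rescaledKernel hK).comp_aemeasurable
    (hU.prodMk hW)).aestronglyMeasurable _
    (ae_of_all _ fun _ => abs_rescaledKernel_mul_rescaledKernel_le hKC hw)

lemma abs_covariance_rescaledKernel_mul_le {b : ℝ}
    {U U' W W' : Ω → V}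
    (hcov : ∀ g h : V × V → ℝ, Measurable g → Measurable h → (∀ z, |g z| ≤ 1) → (∀ z, |h z| ≤ 1) →
      |cov[fun ω => g (U ω, U' ω), fun ω => h (W ω, W' ω); P]| ≤ b)
    (hK : Measurable K) (hKC : ∀ s, |K s| ≤ C) (hC : 0 < C) {w w' : ℝ} (hw' : 0 < w')
    (hw : w' ≤ w) :
    |cov[fun ω => rescaledKernel K w x (U ω) * rescaledKernel K w y (U' ω),
        fun ω => rescaledKernel K w' x (W ω) * rescaledKernel K w' y (W' ω); P]|
      ≤ ((w' ^ Module.finrank ℝ V)⁻¹ * C) ^ 4 * b := by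
  have hmono : (w ^ Module.finrank ℝ V)⁻¹ ≤ (w' ^ Module.finrank ℝ V)⁻¹ := by gcongr
  have hw0 : 0 < w := hw'.trans_le hw
  refine (abs_covariance_comp_le_of_abs_le hcov (measurable_rescaledKernel_mul_rescaledKernel hK)
    (measurable_rescaledKernel_mul_rescaledKernel hK)
    (A := ((w' ^ Module.finrank ℝ V)⁻¹ * C) ^ 2) (B := ((w' ^ Module.finrank ℝ V)⁻¹ * C) ^ 2)
    (by positivity) (by positivity) (fun z => ?_)
    fun z => abs_rescaledKernel_mul_rescaledKernel_le hKC hw'.le).trans_eq (by ring)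
  exact (abs_rescaledKernel_mul_rescaledKernel_le hKC hw0.le).trans (by gcongr)

lemma inv_pow_mul_rpow_neg (w₁ β j : ℝ) (hj : 0 ≤ j) (d : ℕ) :
    ((w₁ * j ^ (-β)) ^ d)⁻¹ = (w₁ ^ d)⁻¹ * j ^ (β * d) := by
  rw [mul_pow, mul_inv, ← Real.rpow_mul_natCast hj, ← Real.rpow_neg hj, neg_mul, neg_neg]

theorem exists_variance_sum_rescaledKernel_le [IsFiniteMeasure P]
    {Zm Z : ℕ → Ω → V} (hZm : ∀ n, 1 ≤ n → AEMeasurable (Zm n) P)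
    (hZ : ∀ n, 1 ≤ n → AEMeasurable (Z n) P) {φ : ℕ → ℝ} (hφ : Summable φ)
    (hcov : ∀ g h : V × V → ℝ, Measurable g → Measurable h → (∀ z, |g z| ≤ 1) → (∀ z, |h z| ≤ 1) →
      ∀ m n, 1 ≤ m → m ≤ n →
        |cov[fun ω => g (Zm m ω, Z m ω), fun ω => h (Zm n ω, Z n ω); P]| ≤ φ (n - m))
    (hK : Measurable K) (hKC : ∀ s, |K s| ≤ C) (hC : 0 < C) {w₁ β : ℝ} (hw₁ : 0 < w₁) (hβ : 0 ≤ β)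
    {w : ℕ → ℝ} (hw : ∀ j : ℕ, w j = w₁ * (j : ℝ) ^ (-β)) :
    ∃ D, ∀ n : ℕ, Var[fun ω => ∑ i ∈ Finset.range n, rescaledKernel K (w (i + 1)) x (Zm (i + 1) ω) *
      rescaledKernel K (w (i + 1)) y (Z (i + 1) ω); P]
        ≤ D * (n : ℝ) ^ (1 + 4 * β * Module.finrank ℝ V) := by
  have hw0 : ∀ i, 0 < w (i + 1) := fun i => by
    rw [hw]
    positivity
  have hφ0 : ∀ l, 0 ≤ φ l := fun l => by
    simpa using (abs_nonneg _).trans (hcov 0 0 measurable_const measurable_const (by simp)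
      (by simp) 1 (1 + l) le_rfl (Nat.le_add_right 1 l))
  refine exists_variance_sum_range_le_rpow (C := ((w₁ ^ Module.finrank ℝ V)⁻¹ * C) ^ 4)
    (fun i => ?_) (by positivity) (by positivity) hφ0 hφ fun i j hij => ?_
  · exact memLp_rescaledKernel_mul_rescaledKernel hK hKC (hw0 i).le (hZm _ i.succ_pos)
      (hZ _ i.succ_pos) 2
  · have hanti : w (j + 1) ≤ w (i + 1) := by
      rw [hw, hw]
      refine mul_le_mul_of_nonneg_left ?_ hw₁.le
      exact Real.rpow_le_rpow_of_nonpos (by positivity) (by push_cast; gcongr) (neg_nonpos.2 hβ)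
    refine (abs_covariance_rescaledKernel_mul_le
      (fun g h hg hh hg1 hh1 => hcov g h hg hh hg1 hh1 _ _ (by omega) (by omega : i + 1 ≤ j + 1))
      hK hKC hC (hw0 j) hanti).trans_eq ?_
    rw [hw, inv_pow_mul_rpow_neg w₁ β _ (by positivity), mul_right_comm, mul_pow _ _ 4,
      ← Real.rpow_mul_natCast (by positivity), Nat.add_sub_add_right]
    push_cast
    ring_nf

theorem tendsto_integral_rescaledKernel_mul_chain [FiniteDimensional ℝ V] [IsProbabilityMeasure P]
    {ν : Measure V} [ν.IsAddHaarMeasure] {E : Set V} (hE : IsOpen E) (hx : x ∈ E)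
    {R Q : Kernel V V} [IsMarkovKernel R] [IsMarkovKernel Q] {π : Measure V}
    [IsProbabilityMeasure π] {X Y : ℕ → Ω → V} (hX : ∀ n, ∀ᵐ ω ∂P, X n ω ∈ closure E)
    (hR : ∀ n, HasCondDistrib (X (n + 1)) (X n) R P) (hQ : ∀ n, HasCondDistrib (Y n) (X n) Q P)
    (hπ : ∀ ξ ∈ closure E, ∀ B, MeasurableSet B →
      Tendsto (fun n => ((R ^ n) ξ).real B) atTop (𝓝 (π.real B)))
    {r : V → V → ℝ} (hr : Measurable (Function.uncurry r)) (hr0 : ∀ ξ z, 0 ≤ r ξ z) {Cr : ℝ}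
    (hrC : ∀ ξ z, r ξ z ≤ Cr) (hrx : EquicontinuousAt r x)
    (hRr : ∀ ξ ∈ closure E,
      (R ξ).restrict E = (ν.restrict E).withDensity fun z => ENNReal.ofReal (r ξ z))
    {q : V → V → ℝ} (hq : Measurable (Function.uncurry q)) (hq0 : ∀ ξ z, 0 ≤ q ξ z) {Cq : ℝ}
    (hqC : ∀ ξ z, q ξ z ≤ Cq) (hqc : ContinuousAt (Function.uncurry q) (x, y))
    (hQq : ∀ ξ, Q ξ = ν.withDensity fun z => ENNReal.ofReal (q ξ z))
    (hK : Measurable K) (hK0 : ∀ s, 0 ≤ K s) (hKC : ∀ s, K s ≤ C) (hK1 : ∫ s, K s ∂ν = 1)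
    {δ : ℝ} (hKδ : Function.support K ⊆ Metric.ball 0 δ)
    {w : ℕ → ℝ} (hw0 : ∀ n, 0 < w n) (hw : Tendsto w atTop (𝓝 0)) :
    Tendsto (fun n => ∫ ω, rescaledKernel K (w n) x (X n ω) * rescaledKernel K (w n) y (Y n ω) ∂P)
      atTop (𝓝 ((∫ ξ, r ξ x ∂π) * q x y)) := by
  have hprob := fun n => Measure.isProbabilityMeasure_map (hR n).aemeasurable_fst
  have hmem : ∀ n, ∀ᵐ ξ ∂P.map (X n), ξ ∈ closure E := fun n =>
    (ae_map_iff (hR n).aemeasurable_fst isClosed_closure.measurableSet).2 (hX n)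
  have hint : ∀ n z, Integrable (fun ξ => r ξ z) (P.map (X n)) := fun n z =>
    .of_bound hr.of_uncurry_right.aestronglyMeasurable Cr (ae_of_all _ fun ξ => by
      rw [Real.norm_of_nonneg (hr0 ξ z)]
      exact hrC ξ z)
  have hlaw : ∀ n, (P.map (X (n + 1))).restrict E
      = (ν.restrict E).withDensity fun z => ENNReal.ofReal (∫ ξ, r ξ z ∂P.map (X n)) := fun n => by
    rw [map_eq_comp_of_hasCondDistrib (hR n)]
    exact restrict_comp_eq_withDensity hr hr0 (hint n) hE.measurableSet ((hmem n).mono hRr)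
  have hlim := tendsto_integral_map_of_tendsto_pow hR
    (fun B hB => (hmem 0).mono fun ξ hξ => hπ ξ hξ B hB) hr.of_uncurry_right (hr0 · x) (hrC · x)
  rw [← tendsto_add_atTop_iff_nat 1, mul_comm]
  refine (tendsto_integral_rescaledKernel_mul_rescaledKernel_compProd hQq hq hq0 hqC hqc hK hK0 hKC
    hK1 hKδ (hE.mem_nhds hx) (fun n => ?_) (fun n z => integral_nonneg (hr0 · z)) (M := Cr)
    (fun n z => ?_) hlaw (fun n => hw0 (n + 1)) ((tendsto_add_atTop_iff_nat 1).2 hw)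
    fun u hu => tendsto_integral_of_equicontinuousAt hrx hint hu hlim).congr fun n => ?_
  · exact hr.stronglyMeasurable.integral_prod_left.measurable
  · simpa using integral_mono (hint n z) (integrable_const Cr) (hrC · z)
  · rw [← (hQ (n + 1)).map_eq, integral_map (hQ (n + 1)).aemeasurable
      (measurable_rescaledKernel_mul_rescaledKernel hK).aestronglyMeasurable]

end KernelEstimator

theorem stmt3_general {V : Type*} [NormedAddCommGroup V] [NormedSpace ℝ V] [FiniteDimensional ℝ V]
    [MeasurableSpace V] [BorelSpace V] {ν : Measure V} [ν.IsAddHaarMeasure]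
    {Ω : Type*} [MeasurableSpace Ω] {P : Measure Ω} [IsProbabilityMeasure P]
    {E : Set V} (hE : IsOpen E) {R Q : Kernel V V} [IsMarkovKernel R] [IsMarkovKernel Q]
    {Zm Z : ℕ → Ω → V} (hZm : ∀ n, 1 ≤ n → ∀ᵐ ω ∂P, Zm n ω ∈ closure E)
    (hR : ∀ n, 1 ≤ n → HasCondDistrib (Zm (n + 1)) (Zm n) R P)
    (hQ : ∀ n, 1 ≤ n → HasCondDistrib (Z n) (Zm n) Q P)
    {π : Measure V} [IsProbabilityMeasure π]
    (hπ : ∀ ξ ∈ closure E, ∀ B, MeasurableSet B →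
      Tendsto (fun n => ((R ^ n) ξ).real B) atTop (𝓝 (π.real B)))
    {r : V → V → ℝ} (hr : Measurable (Function.uncurry r)) (hr0 : ∀ ξ z, 0 ≤ r ξ z) {Cr : ℝ}
    (hrC : ∀ ξ z, r ξ z ≤ Cr)
    (hRr : ∀ ξ ∈ closure E,
      (R ξ).restrict E = (ν.restrict E).withDensity fun z => ENNReal.ofReal (r ξ z))
    {q : V → V → ℝ} (hq : Measurable (Function.uncurry q)) (hq0 : ∀ ξ z, 0 ≤ q ξ z) {Cq : ℝ}
    (hqC : ∀ ξ z, q ξ z ≤ Cq)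
    (hQq : ∀ ξ, Q ξ = ν.withDensity fun z => ENNReal.ofReal (q ξ z))
    {K : V → ℝ} (hK : Measurable K) (hK0 : ∀ s, 0 ≤ K s) {CK : ℝ} (hKC : ∀ s, K s ≤ CK)
    (hK1 : ∫ s, K s ∂ν = 1) {δ : ℝ} (hKδ : Function.support K ⊆ Metric.ball 0 δ)
    {φ : ℕ → ℝ} (hφ : Summable φ)
    (hcov : ∀ g h : V × V → ℝ, Measurable g → Measurable h → (∀ z, |g z| ≤ 1) → (∀ z, |h z| ≤ 1) →
      ∀ m n, 1 ≤ m → m ≤ n →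
        |cov[fun ω => g (Zm m ω, Z m ω), fun ω => h (Zm n ω, Z n ω); P]| ≤ φ (n - m))
    {w₁ β : ℝ} (hw₁ : 0 < w₁) (hβ : 0 < β) (hβd : 4 * β * Module.finrank ℝ V < 1)
    {w : ℕ → ℝ} (hw : ∀ j : ℕ, w j = w₁ * (j : ℝ) ^ (-β))
    {x y : V} (hx : x ∈ E) (hrx : EquicontinuousAt r x)
    (hqc : ContinuousAt (Function.uncurry q) (x, y)) :
    ∀ᵐ ω ∂P, Tendsto (fun n : ℕ => (n : ℝ)⁻¹ * ∑ j ∈ Finset.Icc 1 (n + 1),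
      rescaledKernel K (w j) x (Zm j ω) * rescaledKernel K (w j) y (Z j ω))
      atTop (𝓝 ((∫ ξ, r ξ x ∂π) * q x y)) := by
  have hKabs : ∀ s, |K s| ≤ CK := fun s => (abs_of_nonneg (hK0 s)).trans_le (hKC s)
  have hCK : 0 < CK := by
    by_contra! hCK0
    linarith [integral_nonpos (μ := ν) fun s => (hKC s).trans hCK0]
  have hw0 : ∀ i, 0 < w (i + 1) := fun i => by
    rw [hw]
    positivity
  have hwlim : Tendsto w atTop (𝓝 0) := by
    simpa [funext hw] using
      ((tendsto_rpow_neg_atTop hβ).comp tendsto_natCast_atTop_atTop).const_mul w₁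
  have hmean := tendsto_integral_rescaledKernel_mul_chain hE hx (fun n => hZm _ n.succ_pos)
    (fun n => hR _ n.succ_pos) (fun n => hQ _ n.succ_pos) hπ hr hr0 hrC hrx hRr hq hq0 hqC hqc hQq
    hK hK0 hKC hK1 hKδ hw0 ((tendsto_add_atTop_iff_nat 1).2 hwlim)
  obtain ⟨D, hvar⟩ := exists_variance_sum_rescaledKernel_le (x := x) (y := y)
    (fun n hn => (hR n hn).aemeasurable_fst) (fun n hn => (hQ n hn).aemeasurable_snd) hφ hcov hK
    hKabs hCK hw₁ hβ.le hw
  have haverage := ae_tendsto_sum_div_of_variance_le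
    (fun i => memLp_rescaledKernel_mul_rescaledKernel hK hKabs (hw0 i).le
      (hR _ i.succ_pos).aemeasurable_fst (hQ _ i.succ_pos).aemeasurable_snd 2)
    (fun i => ae_of_all _ fun ω => mul_nonneg (rescaledKernel_nonneg hK0 (hw0 i).le)
      (rescaledKernel_nonneg hK0 (hw0 i).le)) (by linarith) hvar hmean
  filter_upwards [haverage] with ω hω
  exact tendsto_inv_mul_sum_Icc_succ hω

theorem stmt3
    {d : ℕ} (hd : 1 ≤ d)
    {Ω : Type*} [MeasurableSpace Ω] (P : Measure Ω) [IsProbabilityMeasure P]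
    (E : Set (EuclideanSpace ℝ (Fin d))) (hEopen : IsOpen E) (hEne : E.Nonempty)
    (Zm : ℕ → Ω → (EuclideanSpace ℝ (Fin d))) (hZmmeas : ∀ n, Measurable (Zm n))
    (hZmmem : ∀ n, 1 ≤ n → ∀ ω, Zm n ω ∈ closure E)
    (R : (EuclideanSpace ℝ (Fin d)) → Measure (EuclideanSpace ℝ (Fin d))) (hRprob : ∀ ξ, IsProbabilityMeasure (R ξ))
    (hRkermeas : ∀ B : Set (EuclideanSpace ℝ (Fin d)), MeasurableSet B → Measurable fun ξ => R ξ B)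
    (hMarkov : ∀ n, 1 ≤ n → ∀ g : (EuclideanSpace ℝ (Fin d)) → ℝ, Measurable g → (∃ C, ∀ u, |g u| ≤ C) →
      P[fun ω => g (Zm (n+1) ω)|⨆ i : Fin n, MeasurableSpace.comap (Zm (i.1+1)) inferInstance]
        =ᵐ[P] fun ω => ∫ u, g u ∂(R (Zm n ω)))
    (μ : Measure (EuclideanSpace ℝ (Fin d))) (hμprob : IsProbabilityMeasure μ)
    (ε : ℝ) (hε : 0 < ε) (k : ℕ) (hk : 1 ≤ k)
    (hDoeblin : ∀ ξ ∈ closure E, ∀ B : Set (EuclideanSpace ℝ (Fin d)), MeasurableSet B →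
      ENNReal.ofReal ε * μ B ≤ iterK R k ξ B)
    (π : Measure (EuclideanSpace ℝ (Fin d))) (hπprob : IsProbabilityMeasure π)
    (hπinv : ∀ B : Set (EuclideanSpace ℝ (Fin d)), MeasurableSet B → π B = ∫⁻ ξ, R ξ B ∂π)
    (κ ρ : ℝ) (hκ : 0 < κ) (hρ : 1 < ρ)
    (hTV : ∀ n : ℕ, 1 ≤ n → ∀ ξ ∈ closure E, ∀ B : Set (EuclideanSpace ℝ (Fin d)), MeasurableSet B →
      |(iterK R n ξ B).toReal - (π B).toReal| ≤ κ * ρ ^ (-(n:ℝ)))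
    (r : (EuclideanSpace ℝ (Fin d)) → (EuclideanSpace ℝ (Fin d)) → ℝ) (hrmeas : Measurable (Function.uncurry r)) (hrnonneg : ∀ a b, 0 ≤ r a b)
    (Cr : ℝ) (hrbdd : ∀ a b, r a b ≤ Cr)
    (rLip : ℝ) (hrLip : ∀ a : (EuclideanSpace ℝ (Fin d)), ∀ b ∈ E, ∀ b' ∈ E, |r a b' - r a b| ≤ rLip * dist b' b)
    (hRdens : ∀ ξ ∈ closure E, ∀ B : Set (EuclideanSpace ℝ (Fin d)), B ⊆ E → MeasurableSet B →
      R ξ B = ∫⁻ z in B, ENNReal.ofReal (r ξ z) ∂volume)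
    (p : (EuclideanSpace ℝ (Fin d)) → ℝ) (hp : ∀ z ∈ E, p z = ∫ u, r u z ∂π)
    (K : (EuclideanSpace ℝ (Fin d)) → ℝ) (hKmeas : Measurable K) (hKnonneg : ∀ z, 0 ≤ K z)
    (CK : ℝ) (hKbdd : ∀ z, K z ≤ CK) (hKint : ∫ z, K z ∂volume = 1)
    (δ : ℝ) (hδ : 0 < δ) (hKsupp : Function.support K ⊆ Metric.ball 0 δ)
    (Z : ℕ → Ω → (EuclideanSpace ℝ (Fin d))) (hZmeas : ∀ n, Measurable (Z n)) (hZmem : ∀ n, 1 ≤ n → ∀ ω, Z n ω ∈ E)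
    (Qm : (EuclideanSpace ℝ (Fin d)) → Measure (EuclideanSpace ℝ (Fin d))) (hQprob : ∀ ξ, IsProbabilityMeasure (Qm ξ))
    (q : (EuclideanSpace ℝ (Fin d)) → (EuclideanSpace ℝ (Fin d)) → ℝ) (hqmeas : Measurable (Function.uncurry q)) (hqnonneg : ∀ a b, 0 ≤ q a b)
    (Cq : ℝ) (hqbdd : ∀ a b, q a b ≤ Cq)
    (qLip : ℝ) (hqLip1 : ∀ a b b' : (EuclideanSpace ℝ (Fin d)), |q a b' - q a b| ≤ qLip * dist b' b)
    (hqLip2 : ∀ a a' b : (EuclideanSpace ℝ (Fin d)), |q a' b - q a b| ≤ qLip * dist a' a)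
    (hQdens : ∀ ξ : (EuclideanSpace ℝ (Fin d)), ∀ B : Set (EuclideanSpace ℝ (Fin d)), MeasurableSet B →
      Qm ξ B = ∫⁻ z in B, ENNReal.ofReal (q ξ z) ∂volume)
    (hZcond : ∀ n, 1 ≤ n → ∀ g : (EuclideanSpace ℝ (Fin d)) → ℝ, Measurable g → (∃ C, ∀ u, |g u| ≤ C) →
      P[fun ω => g (Z n ω)|(⨆ i : Fin n, MeasurableSpace.comap (Zm (i.1+1)) inferInstance) ⊔
          (⨆ i : Fin (n-1), MeasurableSpace.comap (Z (i.1+1)) inferInstance)]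
        =ᵐ[P] fun ω => ∫ u, g u ∂(Qm (Zm n ω)))
    (Bc bc : ℝ) (hBc : 0 < Bc) (hbc : 1 < bc)
    (hcov : ∀ g h : (EuclideanSpace ℝ (Fin d)) → (EuclideanSpace ℝ (Fin d)) → ℝ, Measurable (Function.uncurry g) → Measurable (Function.uncurry h) →
      (∀ a b, |g a b| ≤ 1) → (∀ a b, |h a b| ≤ 1) →
      ∀ m n : ℕ, 1 ≤ m → m ≤ n →
        |∫ ω, g (Zm m ω) (Z m ω) * h (Zm n ω) (Z n ω) ∂P -
          (∫ ω, g (Zm m ω) (Z m ω) ∂P) * (∫ ω, h (Zm n ω) (Z n ω) ∂P)| ≤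
          Bc * bc ^ (-((n:ℝ) - (m:ℝ))) * (1 + bc ^ (-(m:ℝ))))
    (w1 Beta : ℝ) (hw1 : 0 < w1) (hBeta : 0 < Beta)
    (w : ℕ → ℝ) (hw : ∀ j : ℕ, w j = w1 * (j:ℝ) ^ (-Beta))
    (x y : (EuclideanSpace ℝ (Fin d))) (hx : x ∈ E) (hy : y ∈ E)
    (hxdist : w1 * δ < Metric.infDist x (frontier E))
    (hydist : w1 * δ < Metric.infDist y (frontier E))
    (hβd : 8 * Beta * d < 1) :
    ∀ᵐ ω ∂P, Tendsto (fun n : ℕ => (n:ℝ)⁻¹ * ∑ j ∈ Finset.Icc 1 (n+1), ((w j) ^ (2*d))⁻¹ * (K ((w j)⁻¹ • (Zm j ω - x)) * K ((w j)⁻¹ • (Z j ω - y)))) atTop (nhds (p x * q x y)) := by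
  let Rk : Kernel _ _ := ⟨R, Measure.measurable_of_measurable_coe R hRkermeas⟩
  let Qk : Kernel _ _ := ⟨Qm, measurable_of_forall_eq_setLIntegral hqmeas hQdens⟩
  have hRk : IsMarkovKernel Rk := ⟨hRprob⟩
  have hQk : IsMarkovKernel Qk := ⟨hQprob⟩
  have hZmR : ∀ n, 1 ≤ n → HasCondDistrib (Zm (n + 1)) (Zm n) Rk P := fun n hn =>
    hasCondDistrib_of_condExp (iSup_comap_succ_le hZmmeas n) (measurable_iSup_comap_succ Zm hn)
      (hZmmeas _) (hMarkov n hn)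
  have hZQ : ∀ n, 1 ≤ n → HasCondDistrib (Z n) (Zm n) Qk P := fun n hn =>
    hasCondDistrib_of_condExp
      (sup_le (iSup_comap_succ_le hZmmeas n) (iSup_comap_succ_le hZmeas (n - 1)))
      ((measurable_iSup_comap_succ Zm hn).mono le_sup_left le_rfl) (hZmeas n) (hZcond n hn)
  have hcovφ := fun (g h : _ × _ → ℝ) hg hh hg1 hh1 m n hm (hmn : m ≤ n) =>
    abs_covariance_le_of_mixing hZmmeas hZmeas hBc.le hbc.le hmn
      (fun g h hg hh hg1 hh1 => hcov g h hg hh hg1 hh1 m n hm hmn) (g := g) (h := h) hg hh hg1 hh1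
  have hlim := stmt3_general (ν := volume) hEopen (fun n hn => ae_of_all _ (hZmmem n hn)) hZmR hZQ
    (fun ξ hξ B hB => tendsto_measureReal_pow_of_abs_iterK_sub_le hρ fun n hn => hTV n hn ξ hξ B hB)
    hrmeas hrnonneg hrbdd
    (fun ξ hξ => restrict_eq_withDensity_of_forall_subset hEopen.measurableSet (hRdens ξ hξ))
    hqmeas hqnonneg hqbdd
    (fun ξ => Measure.ext fun B hB => (hQdens ξ B hB).trans (withDensity_apply _ hB).symm)
    hKmeas hKnonneg hKbdd hKint hKsupp
    ((summable_geometric_of_lt_one (by positivity) (inv_lt_one_of_one_lt₀ hbc)).mul_left _) hcovφ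
    hw1 hBeta (by rw [finrank_euclideanSpace_fin]; linarith) hw hx
    (equicontinuousAt_of_abs_sub_le (hEopen.mem_nhds hx) hrLip)
    (continuous_uncurry_of_abs_sub_le hqLip1 hqLip2).continuousAt (y := y)
  simpa only [hp x hx, rescaledKernel_mul_rescaledKernel, finrank_euclideanSpace_fin] using hlim
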